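/- Under the Lagrangian flow data assumptions, let v : ℝ^d × [0,1] → ℝ^d be jointly measurable with v(·,t) the flow-matched vector field for a.e. t (as in the continuity-equation setting). Let f : ℝ^d × [0,1] → ℝ and G : ℝ^d → ℝ be measurable functions such that all integrals below are finite. Then the Eulerian cost is bounded by the Lagrangian cost: ∫_0^1 ( (1/2) ∫ ‖v(y,t)‖² dρ_t(y) + ∫ f(y,t) dρ_t(y) ) dt + ∫ G(y) dρ_1(y) ≤ ∫_0^1 ∫ ( (1/2) ‖V(x,t)‖² + f(X(x,t),t) ) dμ(x) dt + ∫ G(X(x,1)) dμ(x); moreover the interaction and terminal terms coincide exactly (∫ f(·,t) dρ_t = ∫ f(X_t(·),t) dμ for a.e. t and ∫ G dρ_1 = ∫ G(X_1(·)) dμ), so the inequality holds in the kinetic term: ∫_0^1 ∫ ‖v(y,t)‖² dρ_t(y) dt ≤ ∫_0^1 ∫ ‖V(x,t)‖² dμ(x) dt. -/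

import Mathlib

open MeasureTheory Set
open scoped RealInnerProductSpace

/-!
At each time the flow-matched field, read along the flow, is the orthogonal projection in `L²(μ)`
of the velocity `V_t` onto the functions of the position `X_t`, that is, the conditional
expectation `E[V_t | X_t]`. By Pythagoras the projection does not increase the kinetic energy, the
loss being the mean square of `V_t - v_t ∘ X_t`. The running and terminal costs depend only on the
law `ρ_t` of `X_t`, so a change of variables leaves them unchanged.
-/

section Projection

variable {Ω S E : Type*} [MeasurableSpace Ω] [MeasurableSpace S] [NormedAddCommGroup E]

theorem integrable_inner_of_memLp {𝕜 : Type*} [RCLike 𝕜] [InnerProductSpace 𝕜 E] {μ : Measure Ω}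
    {p q : ENNReal} [ENNReal.HolderConjugate p q] {g h : Ω → E} (hg : MemLp g p μ)
    (hh : MemLp h q μ) : Integrable (fun ω => inner 𝕜 (g ω) (h ω)) μ :=
  (hg.norm.integrable_mul hh.norm).mono' (hg.aestronglyMeasurable.inner hh.aestronglyMeasurable)
    (.of_forall fun ω => norm_inner_le_norm (g ω) (h ω))

variable [InnerProductSpace ℝ E]

/-- `w` is a flow-matched field of the velocity `V` at the position `X`: a square-integrable
field with `∫ ⟪ψ, w⟫ dρ = ∫ ⟪ψ ∘ X, V⟫ dμ` for every square-integrable test field `ψ`, where `ρ` is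
the law of `X` under `μ`. Fields are strongly measurable, so that `E` need not be separable, and
positions may take values in a space `S` other than `E`. -/
structure IsFlowMatched (μ : Measure Ω) (X : Ω → S) (V : Ω → E) (w : S → E) : Prop where
  stronglyMeasurable : StronglyMeasurable w
  memLp : MemLp w 2 (μ.map X)
  integral_inner_eq : ∀ ψ : S → E, StronglyMeasurable ψ → MemLp ψ 2 (μ.map X) →
    ∫ y, ⟪ψ y, w y⟫ ∂(μ.map X) = ∫ ω, ⟪ψ (X ω), V ω⟫ ∂μ

namespace IsFlowMatched

variable {μ : Measure Ω} {X : Ω → S} {V : Ω → E} {w : S → E}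

theorem of_integrable_norm_sq [MeasurableSpace E] [BorelSpace E] [SecondCountableTopology E]
    (hw : Measurable w) (hw2 : Integrable (fun y => ‖w y‖ ^ 2) (μ.map X))
    (h : ∀ ψ : S → E, Measurable ψ → Integrable (fun y => ‖ψ y‖ ^ 2) (μ.map X) →
      ∫ y, ⟪ψ y, w y⟫ ∂(μ.map X) = ∫ ω, ⟪ψ (X ω), V ω⟫ ∂μ) :
    IsFlowMatched μ X V w where
  stronglyMeasurable := hw.stronglyMeasurable
  memLp := (memLp_two_iff_integrable_sq_norm hw.aestronglyMeasurable).2 hw2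
  integral_inner_eq ψ hψ hψ2 :=
    h ψ hψ.measurable ((memLp_two_iff_integrable_sq_norm hψ.aestronglyMeasurable).1 hψ2)

theorem integral_inner_sub_eq_zero (h : IsFlowMatched μ X V w) (hX : AEMeasurable X μ)
    (hV : MemLp V 2 μ) {ψ : S → E} (hψ : StronglyMeasurable ψ) (hψ2 : MemLp ψ 2 (μ.map X)) :
    ∫ ω, ⟪ψ (X ω), V ω - w (X ω)⟫ ∂μ = 0 := by
  have hψX : MemLp (fun ω => ψ (X ω)) 2 μ := hψ2.comp_of_map hX
  have hwX : MemLp (fun ω => w (X ω)) 2 μ := h.memLp.comp_of_map hX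
  simp only [inner_sub_right]
  rw [integral_sub (integrable_inner_of_memLp hψX hV) (integrable_inner_of_memLp hψX hwX),
    ← h.integral_inner_eq ψ hψ hψ2,
    integral_map hX (hψ.inner h.stronglyMeasurable).aestronglyMeasurable, sub_self]

theorem integral_norm_sq_add_integral_norm_sub_sq (h : IsFlowMatched μ X V w)
    (hX : AEMeasurable X μ) (hV : MemLp V 2 μ) :
    ∫ y, ‖w y‖ ^ 2 ∂(μ.map X) + ∫ ω, ‖V ω - w (X ω)‖ ^ 2 ∂μ = ∫ ω, ‖V ω‖ ^ 2 ∂μ := by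
  have hwX : MemLp (fun ω => w (X ω)) 2 μ := h.memLp.comp_of_map hX
  have hR : MemLp (fun ω => V ω - w (X ω)) 2 μ := hV.sub hwX
  have hw_sq := hwX.integrable_norm_pow two_ne_zero
  have hR_sq := hR.integrable_norm_pow two_ne_zero
  have h_inner : Integrable (fun ω => ⟪w (X ω), V ω - w (X ω)⟫) μ :=
    integrable_inner_of_memLp hwX hR
  symm
  calc ∫ ω, ‖V ω‖ ^ 2 ∂μ
      = ∫ ω, (‖w (X ω)‖ ^ 2 + 2 * ⟪w (X ω), V ω - w (X ω)⟫ + ‖V ω - w (X ω)‖ ^ 2) ∂μ := by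
        simp only [← norm_add_sq_real, add_sub_cancel]
    _ = ∫ ω, ‖w (X ω)‖ ^ 2 ∂μ + 2 * ∫ ω, ⟪w (X ω), V ω - w (X ω)⟫ ∂μ
          + ∫ ω, ‖V ω - w (X ω)‖ ^ 2 ∂μ := by
        rw [integral_add (hw_sq.fun_add (h_inner.const_mul 2)) hR_sq,
          integral_add hw_sq (h_inner.const_mul 2), integral_const_mul]
    _ = ∫ y, ‖w y‖ ^ 2 ∂(μ.map X) + ∫ ω, ‖V ω - w (X ω)‖ ^ 2 ∂μ := by
        rw [h.integral_inner_sub_eq_zero hX hV h.stronglyMeasurable h.memLp, mul_zero, add_zero,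
          integral_map hX (h.memLp.integrable_norm_pow two_ne_zero).aestronglyMeasurable]

theorem integral_norm_sq_le (h : IsFlowMatched μ X V w) (hX : AEMeasurable X μ)
    (hV : MemLp V 2 μ) : ∫ y, ‖w y‖ ^ 2 ∂(μ.map X) ≤ ∫ ω, ‖V ω‖ ^ 2 ∂μ := by
  rw [← h.integral_norm_sq_add_integral_norm_sub_sq hX hV]
  exact le_add_of_nonneg_right (integral_nonneg fun ω => sq_nonneg _)

end IsFlowMatched

end Projection

theorem eulerian_cost_le_lagrangian_cost_general {Ω S T E : Type*} [MeasurableSpace Ω]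
    [MeasurableSpace S] [MeasurableSpace T] [NormedAddCommGroup E] [InnerProductSpace ℝ E]
    {μ : Measure Ω} {τ : Measure T} {X : T → Ω → S} {V : T → Ω → E} {v : T → S → E}
    {f : T → S → ℝ} {G : S → ℝ} {t₁ : T}
    (hX : ∀ t, AEMeasurable (X t) μ)
    (hV : ∀ᵐ t ∂τ, MemLp (V t) 2 μ)
    (hv : ∀ᵐ t ∂τ, IsFlowMatched μ (X t) (V t) (v t))
    (hf : ∀ᵐ t ∂τ, Integrable (f t) (μ.map (X t)))
    (hG : Integrable G (μ.map (X t₁)))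
    (hV_kin : Integrable (fun t => ∫ ω, ‖V t ω‖ ^ 2 ∂μ) τ)
    (hv_kin : Integrable (fun t => ∫ y, ‖v t y‖ ^ 2 ∂(μ.map (X t))) τ)
    (hf_run : Integrable (fun t => ∫ ω, f t (X t ω) ∂μ) τ) :
    (∫ t, ((1 / 2 * ∫ y, ‖v t y‖ ^ 2 ∂(μ.map (X t))) + ∫ y, f t y ∂(μ.map (X t))) ∂τ
        + ∫ y, G y ∂(μ.map (X t₁)) ≤
      ∫ t, ∫ ω, (1 / 2 * ‖V t ω‖ ^ 2 + f t (X t ω)) ∂μ ∂τ + ∫ ω, G (X t₁ ω) ∂μ) ∧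
    (∀ᵐ t ∂τ, ∫ y, f t y ∂(μ.map (X t)) = ∫ ω, f t (X t ω) ∂μ) ∧
    ∫ y, G y ∂(μ.map (X t₁)) = ∫ ω, G (X t₁ ω) ∂μ ∧
    ∫ t, ∫ y, ‖v t y‖ ^ 2 ∂(μ.map (X t)) ∂τ ≤ ∫ t, ∫ ω, ‖V t ω‖ ^ 2 ∂μ ∂τ := by
  have h_run : ∀ᵐ t ∂τ, ∫ y, f t y ∂(μ.map (X t)) = ∫ ω, f t (X t ω) ∂μ :=
    hf.mono fun t hft => integral_map (hX t) hft.aestronglyMeasurable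
  have h_terminal : ∫ y, G y ∂(μ.map (X t₁)) = ∫ ω, G (X t₁ ω) ∂μ :=
    integral_map (hX t₁) hG.aestronglyMeasurable
  have h_kin : ∀ᵐ t ∂τ, ∫ y, ‖v t y‖ ^ 2 ∂(μ.map (X t)) ≤ ∫ ω, ‖V t ω‖ ^ 2 ∂μ := by
    filter_upwards [hv, hV] with t hvt hVt using hvt.integral_norm_sq_le (hX t) hVt
  have h_lagrangian : ∀ᵐ t ∂τ, ∫ ω, (1 / 2 * ‖V t ω‖ ^ 2 + f t (X t ω)) ∂μ =
      1 / 2 * ∫ ω, ‖V t ω‖ ^ 2 ∂μ + ∫ ω, f t (X t ω) ∂μ := by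
    filter_upwards [hV, hf] with t hVt hft
    have hftX : Integrable (fun ω => f t (X t ω)) μ := hft.comp_aemeasurable (hX t)
    rw [integral_add ((hVt.integrable_norm_pow two_ne_zero).const_mul _) hftX, integral_const_mul]
  refine ⟨?_, h_run, h_terminal, integral_mono_ae hv_kin hV_kin h_kin⟩
  rw [h_terminal, integral_congr_ae h_lagrangian]
  gcongr ?_ + _
  refine integral_mono_ae ((hv_kin.const_mul _).add (hf_run.congr (h_run.mono fun _ => Eq.symm)))
    ((hV_kin.const_mul _).add hf_run) ?_
  filter_upwards [h_kin, h_run] with t h_kin_t h_run_t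
  rw [h_run_t]
  gcongr

/-- with `v(·,t)` the flow-matched vector field for a.e. `t`, the Eulerian
cost is bounded by the Lagrangian cost; the interaction and terminal terms coincide
exactly, and the inequality holds in the kinetic term. -/
theorem eulerian_cost_le_lagrangian_cost {d : ℕ}
    (μ : Measure (EuclideanSpace ℝ (Fin d))) [IsProbabilityMeasure μ]
    (hμ2 : Integrable (fun x => ‖x‖ ^ 2) μ)
    (X V : EuclideanSpace ℝ (Fin d) → ℝ → EuclideanSpace ℝ (Fin d))
    (hXm : Measurable (Function.uncurry X))
    (hVm : Measurable (Function.uncurry V))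
    (hflow : ∀ᵐ x ∂μ, X x 0 = x ∧
      ∀ t ∈ Icc (0 : ℝ) 1, X x t = x + ∫ s in (0 : ℝ)..t, V x s)
    (hE : Integrable (fun x => ∫ s in (0 : ℝ)..1, ‖V x s‖ ^ 2) μ)
    (v : EuclideanSpace ℝ (Fin d) → ℝ → EuclideanSpace ℝ (Fin d))
    (hvm : Measurable (Function.uncurry v))
    (hmatch : ∀ᵐ t ∂(volume.restrict (Icc (0 : ℝ) 1)),
      Integrable (fun y => ‖v y t‖ ^ 2) (μ.map (fun x => X x t)) ∧
      ∀ ψ : EuclideanSpace ℝ (Fin d) → EuclideanSpace ℝ (Fin d), Measurable ψ →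
        Integrable (fun y => ‖ψ y‖ ^ 2) (μ.map (fun x => X x t)) →
        ∫ y, ⟪ψ y, v y t⟫ ∂(μ.map (fun x => X x t)) = ∫ x, ⟪ψ (X x t), V x t⟫ ∂μ)
    (f : EuclideanSpace ℝ (Fin d) → ℝ → ℝ) (G : EuclideanSpace ℝ (Fin d) → ℝ)
    (hfm : Measurable (Function.uncurry f)) (hGm : Measurable G)
    -- all integrals below are finite:
    (hVt2 : ∀ᵐ t ∂(volume.restrict (Icc (0 : ℝ) 1)),
      Integrable (fun x => ‖V x t‖ ^ 2) μ)
    (hfX : ∀ᵐ t ∂(volume.restrict (Icc (0 : ℝ) 1)),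
      Integrable (fun x => f (X x t) t) μ)
    (hfout : IntegrableOn (fun t => ∫ x, f (X x t) t ∂μ) (Icc (0 : ℝ) 1))
    (hVout : IntegrableOn (fun t => ∫ x, ‖V x t‖ ^ 2 ∂μ) (Icc (0 : ℝ) 1))
    (hvout : IntegrableOn
      (fun t => ∫ y, ‖v y t‖ ^ 2 ∂(μ.map (fun x => X x t))) (Icc (0 : ℝ) 1))
    (hG : Integrable (fun x => G (X x 1)) μ) :
    ((∫ t in Icc (0 : ℝ) 1,
        ((1 : ℝ) / 2 * ∫ y, ‖v y t‖ ^ 2 ∂(μ.map (fun x => X x t))) +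
          ∫ y, f y t ∂(μ.map (fun x => X x t))) +
        ∫ y, G y ∂(μ.map (fun x => X x 1)) ≤
      (∫ t in Icc (0 : ℝ) 1,
        ∫ x, ((1 : ℝ) / 2 * ‖V x t‖ ^ 2 + f (X x t) t) ∂μ) +
        ∫ x, G (X x 1) ∂μ) ∧
    (∀ᵐ t ∂(volume.restrict (Icc (0 : ℝ) 1)),
      ∫ y, f y t ∂(μ.map (fun x => X x t)) = ∫ x, f (X x t) t ∂μ) ∧
    (∫ y, G y ∂(μ.map (fun x => X x 1)) = ∫ x, G (X x 1) ∂μ) ∧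
    (∫ t in Icc (0 : ℝ) 1, ∫ y, ‖v y t‖ ^ 2 ∂(μ.map (fun x => X x t)) ≤
      ∫ t in Icc (0 : ℝ) 1, ∫ x, ‖V x t‖ ^ 2 ∂μ) := by
  have hX t : Measurable (X · t) := hXm.of_uncurry_right
  have hV t : Measurable (V · t) := hVm.of_uncurry_right
  exact eulerian_cost_le_lagrangian_cost_general (fun t => (hX t).aemeasurable)
    (hVt2.mono fun t => (memLp_two_iff_integrable_sq_norm (hV t).aestronglyMeasurable).2)
    (hmatch.mono fun t ht => .of_integrable_norm_sq hvm.of_uncurry_right ht.1 ht.2)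
    (hfX.mono fun t => (integrable_map_measure hfm.of_uncurry_right.aestronglyMeasurable
      (hX t).aemeasurable).2)
    ((integrable_map_measure hGm.aestronglyMeasurable (hX 1).aemeasurable).2 hG)
    hVout hvout hfout
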